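/- arXiv:2209.12506 — 2 statements merged into one kernel-verified Lean document; each statement's English description precedes it below -/
import Mathlib

section
/- Let G = (V,E) be a strongly connected directed graph and C an abstract simplicial complex on V. If W ⊆ V is independent on (G,C) and Z ⊆ W, then Z is independent on (G,C). -/
/-!
Independence is inherited one vertex at a time. Delete `z` from an independent set `W` and follow a
path of `G_W` between two remaining vertices. An edge of `G_W` avoiding `z` is still an edge of
`G_{W - z}`, because `C` is downward closed (`redEdge_erase`). A visit `a → z → b` is replaced by the
single edge `a → b` (or by nothing if `a = b`): the two underlying paths of `G` concatenate to a path
through `z`, which is now an admissible interior vertex since `(W - {z, a, b}) ∪ {z} ⊆ W ∈ C`; the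
other interior vertices remain admissible since `W - {z, a, b}` lies in both `W - {a, z}` and
`W - {z, b}` (`reach_erase_of_through`).
-/

/-- A constraint set `C` on the vertex set `V` is an abstract simplicial complex (ASC)
if `∅ ∈ C` and `C` is downward closed. -/
def isASC {V : Type*} (C : Finset V → Prop) : Prop :=
  C ∅ ∧ ∀ A B : Finset V, C A → B ⊆ A → C B

/-- `pathIn E T u v` : there is a directed path from `u` to `v` (in the graph with edge
relation `E`) all of whose vertices lie in the set `T`. -/
def pathIn {V : Type*} (E : V → V → Prop) (T : Set V) : V → V → Prop :=
  Relation.ReflTransGen (fun a b => E a b ∧ a ∈ T ∧ b ∈ T)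

/-- The edge relation of the reduced graph `G_W`: for distinct `v1, v2 ∈ W`, there is an
edge `(v1, v2)` iff there is a directed path in `G` from `v1` to `v2` all of whose
vertices lie in `{v1, v2} ∪ ((V ∖ W) ∩ V^C_{W ∖ {v1,v2}})`, where
`V^C_Z = {x : Z ∪ {x} ∈ C}`. -/
def redEdge {V : Type*} [DecidableEq V] (E : V → V → Prop) (C : Finset V → Prop)
    (W : Finset V) (v1 v2 : V) : Prop :=
  v1 ∈ W ∧ v2 ∈ W ∧ v1 ≠ v2 ∧
    pathIn E (({v1, v2} : Set V) ∪
      {x : V | x ∉ W ∧ C (insert x ((W.erase v1).erase v2))}) v1 v2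

/-- `W` is independent on `(G, C)` iff `W = ∅`, or `W ∈ C` and the reduced graph `G_W`
is strongly connected. -/
def independentOn {V : Type*} [DecidableEq V] (E : V → V → Prop) (C : Finset V → Prop)
    (W : Finset V) : Prop :=
  W = ∅ ∨ (C W ∧ ∀ u ∈ W, ∀ v ∈ W, Relation.ReflTransGen (redEdge E C W) u v)

theorem pathIn_mono {V : Type*} {E : V → V → Prop} {S T : Set V} (h : S ⊆ T) {u v : V}
    (p : pathIn E S u v) : pathIn E T u v :=
  Relation.ReflTransGen.mono (fun _ _ hab => ⟨hab.1, h hab.2.1, h hab.2.2⟩) _ _ p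

theorem redEdge_erase {V : Type*} [DecidableEq V] {E : V → V → Prop} {C : Finset V → Prop}
    (hC : isASC C) {W : Finset V} {z a b : V} (ha : a ≠ z) (hb : b ≠ z)
    (h : redEdge E C W a b) : redEdge E C (W.erase z) a b := by
  obtain ⟨haW, hbW, hab, p⟩ := h
  refine ⟨Finset.mem_erase.2 ⟨ha, haW⟩, Finset.mem_erase.2 ⟨hb, hbW⟩, hab, pathIn_mono ?_ p⟩
  rintro x (hx | ⟨hxW, hxC⟩)
  · exact Or.inl hx
  · refine Or.inr ⟨fun hx => hxW (Finset.mem_of_mem_erase hx), hC.2 _ _ hxC ?_⟩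
    intro y
    simp only [Finset.mem_insert, Finset.mem_erase]
    tauto

/-- Two consecutive edges `a → z → b` of `G_W` contract to a path of length at most one in
`G_{W - z}`. -/
theorem reach_erase_of_through {V : Type*} [DecidableEq V] {E : V → V → Prop}
    {C : Finset V → Prop} (hC : isASC C) {W : Finset V} (hW : C W) {z a b : V}
    (haz : redEdge E C W a z) (hzb : redEdge E C W z b) :
    Relation.ReflTransGen (redEdge E C (W.erase z)) a b := by
  by_cases hab : a = b
  · exact hab ▸ .refl
  obtain ⟨haW, hzW, hne, p⟩ := haz
  obtain ⟨-, hbW, hne', q⟩ := hzb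
  refine .single ⟨Finset.mem_erase.2 ⟨hne, haW⟩, Finset.mem_erase.2 ⟨hne'.symm, hbW⟩, hab, ?_⟩
  have hz : z ∉ W.erase z ∧ C (insert z (((W.erase z).erase a).erase b)) := by
    refine ⟨Finset.notMem_erase z W, hC.2 _ _ hW ?_⟩
    intro y
    simp only [Finset.mem_insert, Finset.mem_erase]
    rintro (rfl | h)
    · exact hzW
    · exact h.2.2.2
  refine Relation.ReflTransGen.trans (pathIn_mono ?_ p) (pathIn_mono ?_ q)
  · rintro x ((rfl | rfl) | ⟨hxW, hxC⟩)
    · exact Or.inl (Or.inl rfl)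
    · exact Or.inr hz
    · refine Or.inr ⟨fun hx => hxW (Finset.mem_of_mem_erase hx), hC.2 _ _ hxC ?_⟩
      intro y
      simp only [Finset.mem_insert, Finset.mem_erase]
      tauto
  · rintro x ((rfl | rfl) | ⟨hxW, hxC⟩)
    · exact Or.inr hz
    · exact Or.inl (Or.inr rfl)
    · refine Or.inr ⟨fun hx => hxW (Finset.mem_of_mem_erase hx), hC.2 _ _ hxC ?_⟩
      intro y
      simp only [Finset.mem_insert, Finset.mem_erase]
      tauto

theorem independentOn_erase {V : Type*} [DecidableEq V] {E : V → V → Prop}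
    {C : Finset V → Prop} (hC : isASC C) {W : Finset V} (hW : independentOn E C W) (z : V) :
    independentOn E C (W.erase z) := by
  rcases hW with rfl | ⟨hCW, hconn⟩
  · exact Or.inl rfl
  refine Or.inr ⟨hC.2 _ _ hCW (Finset.erase_subset z W), fun u hu v hv => ?_⟩
  rw [Finset.mem_erase] at hu hv
  -- A walk of `G_W` that currently stands at `z` remembers the vertex from which it entered `z`.
  have key : ∀ w, Relation.ReflTransGen (redEdge E C W) u w →
      (w ≠ z → Relation.ReflTransGen (redEdge E C (W.erase z)) u w) ∧
      (w = z → ∃ a, a ≠ z ∧ Relation.ReflTransGen (redEdge E C (W.erase z)) u a ∧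
        redEdge E C W a z) := by
    intro w hw
    induction hw with
    | refl => exact ⟨fun _ => .refl, fun h => absurd h hu.1⟩
    | @tail b c _ hbc ih =>
      by_cases hb : b = z
      · subst hb
        obtain ⟨a, -, hua, hab⟩ := ih.2 rfl
        exact ⟨fun _ => hua.trans (reach_erase_of_through hC hCW hab hbc),
          fun h => absurd h.symm hbc.2.2.1⟩
      · refine ⟨fun hc => (ih.1 hb).tail (redEdge_erase hC hb hc hbc), ?_⟩
        rintro rfl
        exact ⟨b, hb, ih.1 hb, hbc⟩
  exact (key v (hconn u hu.2 v hv.2)).1 hv.1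

/-- Let `G = (V,E)` be a strongly connected digraph and `C` an ASC on `V`. If
`W ⊆ V` is independent on `(G, C)` and `Z ⊆ W`, then `Z` is independent on `(G, C)`. -/
theorem stmt6 {V : Type*} [Fintype V] [DecidableEq V] (E : V → V → Prop)
    (hirr : ∀ x, ¬ E x x) (hsc : ∀ u v : V, Relation.ReflTransGen E u v)
    (C : Finset V → Prop) (hC : isASC C) (W Z : Finset V)
    (hW : independentOn E C W) (hZW : Z ⊆ W) :
    independentOn E C Z := by
  have key : ∀ S : Finset V, independentOn E C (W \ S) := by
    intro S
    induction S using Finset.induction_on with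
    | empty => simpa using hW
    | insert z S _ ih =>
      rw [Finset.sdiff_insert]
      exact independentOn_erase hC ih z
  simpa [Finset.sdiff_sdiff_eq_self hZW] using key (W \ Z)
end

section
/- Correctness of the 3-SAT reduction: let φ be a 3-SAT instance with variables x_1,…,x_n and clauses C_1,…,C_k, each a disjunction of at most 3 literals c_j^m. Build the directed graph G with vertices: o_i, and literal vertices x_i, x̄_i for each i; vertices s, d_1,…,d_k, t; and a clause vertex c_j^m for each literal occurrence; with edges o_i → x_i, o_i → x̄_i for each i, edge s → d_1, and for each clause j and each of its literal occurrences m, edges d_j → c_j^m and c_j^m → d_{j+1} (where d_{k+1} := t). Let C = C_Q where Q consists of all pairs (S,1) with S ∈ {{d_1, o_i} : 1 ≤ i ≤ n} ∪ {{c_j^m, ℓ} : the literal of occurrence c_j^m is the literal of the vertex ℓ ∈ {x_i, x̄_i}}. Consider the C-MP instance with one marked pebble starting at s with target t, and n obstacle pebbles starting at o_1,…,o_n. Then this C-MP instance is feasible if and only if φ is satisfiable. -/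
/-!
The obstacle pebble of variable `i` can only move once, from `o_i` to one of `x_i`, `x̄_i`, and then
it is stuck. The constraints `{d_1, o_i}` force every obstacle to have made its move when the marked
pebble enters `d_1`, so from that moment on the obstacles encode an assignment `τ`: the obstacle of
`i` sits on the literal of variable `i` which is *false* under `τ`. The constraint `{c_j^m, ℓ}` then
says that the marked pebble may visit `c_j^m` only if its literal is true under `τ`; as each step
from `d_j` to `d_{j+1}` visits such a vertex, reaching `t` means that every clause is satisfied.
This is recorded by the invariant `SatInv`, preserved by every legal move (`SatInv.move`).

Conversely, given a satisfying `τ`, the plan moves each obstacle onto the false literal of its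
variable (`reach_obstacles`) and then walks the marked pebble through a true literal of each clause
(`reach_backbone`); the intermediate configurations are all of the form `conf`.
-/

/-- The set of vertices occupied by the pebbles in configuration `A : P → V`. -/
def occupied {V P : Type*} [DecidableEq V] [Fintype P] (A : P → V) : Finset V :=
  Finset.image A Finset.univ

/-- The configuration obtained from `A` by moving the pebble at `e.1` to `e.2`. -/
def movePeb {V P : Type*} [DecidableEq V] (A : P → V) (e : V × V) : P → V :=
  fun q => if A q = e.1 then e.2 else A q

/-- The transition `ρ(A, e)` along the edge `e = (u, v)` is defined iff `(u,v)` is an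
edge of the graph, `u` is occupied and `v` is unoccupied. -/
def stepOK {V P : Type*} [DecidableEq V] [Fintype P] (E : V → V → Prop) (A : P → V)
    (e : V × V) : Prop :=
  E e.1 e.2 ∧ e.1 ∈ occupied A ∧ e.2 ∉ occupied A

/-- The configuration obtained by executing a plan (a finite sequence of edges)
step by step from `A`. -/
def execPlan {V P : Type*} [DecidableEq V] (A : P → V) : List (V × V) → (P → V)
  | [] => A
  | e :: f => execPlan (movePeb A e) f

/-- `ρ(A, f)` is defined: every step of the plan `f` is defined. -/
def planOK {V P : Type*} [DecidableEq V] [Fintype P] (E : V → V → Prop) :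
    (P → V) → List (V × V) → Prop
  | _, [] => True
  | A, e :: f => stepOK E A e ∧ planOK E (movePeb A e) f

/-- `(f, A)` is consistent with the constraint set `C`: for every prefix `s` of `f`,
`ρ(A, s)` is defined and the set of occupied vertices of `ρ(A, s)` belongs to `C`. -/
def consistent {V P : Type*} [DecidableEq V] [Fintype P] (E : V → V → Prop)
    (C : Finset V → Prop) : (P → V) → List (V × V) → Prop
  | A, [] => C (occupied A)
  | A, e :: f => C (occupied A) ∧ stepOK E A e ∧ consistent E C (movePeb A e) f

/-- The list of consecutive edges of a list of vertices. -/
def edgesOf {V : Type*} : List V → List (V × V)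
  | a :: b :: l => (a, b) :: edgesOf (b :: l)
  | _ => []

/-- `q` is the edge sequence of a directed path in `G` from `u` to `v`. -/
def isPathList {V : Type*} (E : V → V → Prop) (u v : V) (q : List (V × V)) : Prop :=
  ∃ l : List V, List.Chain E u l ∧ (u :: l).getLast (List.cons_ne_nil u l) = v ∧
    q = edgesOf (u :: l)

/-- The constraint set `C_Q` associated to a family `Q` of pairs `(S, k)`. -/
def CQ {V : Type*} [DecidableEq V] (Q : Set (Finset V × ℕ)) (U : Finset V) : Prop :=
  ∀ p ∈ Q, (p.1 ∩ U).card ≤ p.2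

section SatReduction

variable (n k : ℕ) (φ : Fin k → List (Fin n × Bool))

/-- Indices of the literal occurrences: a pair `(j, m)` where `m` indexes an actual
literal of the `j`-th clause. -/
abbrev ClauseIdx : Type := {jm : Fin k × Fin 3 // (jm.2 : ℕ) < (φ jm.1).length}

/-- The vertex set of the graph built from a 3-SAT instance: the obstacle vertices
`o_i`, the literal vertices `x_i, x̄_i` (encoded as pairs `(i, true)` and `(i, false)`),
the backbone vertices `s = 0`, `d_j = j` (`1 ≤ j ≤ k`), `t = k+1`, and one clause
vertex `c_j^m` for each literal occurrence. -/
abbrev SatV : Type :=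
  Fin n ⊕ ((Fin n × Bool) ⊕ (Fin (k + 2) ⊕ ClauseIdx n k φ))

/-- The obstacle vertex `o_i`. -/
def oV (i : Fin n) : SatV n k φ := Sum.inl i

/-- The literal vertex `x_i` (if `l.2 = true`) or `x̄_i` (if `l.2 = false`). -/
def litV (l : Fin n × Bool) : SatV n k φ := Sum.inr (Sum.inl l)

/-- The backbone vertex of index `j`: `s` for `j = 0`, `d_j` for `1 ≤ j ≤ k`,
`t` for `j = k + 1`. -/
def dV (j : Fin (k + 2)) : SatV n k φ := Sum.inr (Sum.inr (Sum.inl j))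

/-- The clause vertex `c_j^m`. -/
def cV (jm : ClauseIdx n k φ) : SatV n k φ := Sum.inr (Sum.inr (Sum.inr jm))

/-- The literal of the occurrence `c_j^m`. -/
def litOf (jm : ClauseIdx n k φ) : Fin n × Bool := (φ jm.1.1).get ⟨jm.1.2, jm.2⟩

/-- The edges of the graph built from a 3-SAT instance: `o_i → x_i`, `o_i → x̄_i`,
`s → d_1`, and for each clause `j` and literal occurrence `m`: `d_j → c_j^m` and
`c_j^m → d_{j+1}` (with `d_{k+1} := t`). -/
def SatE : SatV n k φ → SatV n k φ → Prop := fun a b =>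
  (∃ (i : Fin n) (bo : Bool), a = oV n k φ i ∧ b = litV n k φ (i, bo)) ∨
  (a = dV n k φ ⟨0, by omega⟩ ∧ b = dV n k φ ⟨1, by omega⟩) ∨
  (∃ jm : ClauseIdx n k φ,
    a = dV n k φ ⟨(jm.1.1 : ℕ) + 1, by have := jm.1.1.isLt; omega⟩ ∧ b = cV n k φ jm) ∨
  (∃ jm : ClauseIdx n k φ,
    a = cV n k φ jm ∧ b = dV n k φ ⟨(jm.1.1 : ℕ) + 2, by have := jm.1.1.isLt; omega⟩)

/-- The constraint family `Q`: all pairs `(S, 1)` with `S ∈ {{d_1, o_i} : i}` or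
`S ∈ {{c_j^m, ℓ} : ℓ is the literal vertex of the literal of the occurrence c_j^m}`. -/
def SatQ : Set (Finset (SatV n k φ) × ℕ) :=
  {p | (∃ i : Fin n, p = ({dV n k φ ⟨1, by omega⟩, oV n k φ i}, 1)) ∨
       (∃ jm : ClauseIdx n k φ, p = ({cV n k φ jm, litV n k φ (litOf n k φ jm)}, 1))}

/-- The initial configuration: the marked pebble (pebble `0`) at `s`, and the obstacle
pebble `i + 1` at `o_i` for each variable `i`. -/
def satInit : Fin (n + 1) → SatV n k φ :=
  Fin.cases (dV n k φ ⟨0, by omega⟩) (fun i => oV n k φ i)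

end SatReduction

/-! ### Plans and reachability -/

theorem execPlan_snoc {V P : Type*} [DecidableEq V] (A : P → V) (f : List (V × V))
    (e : V × V) :
    execPlan A (f ++ [e]) = movePeb (execPlan A f) e := by
  induction f generalizing A with
  | nil => rfl
  | cons e' f ih => exact ih _

section Plans

variable {V P : Type*} [DecidableEq V] [Fintype P]

theorem mem_occupied {A : P → V} {v : V} : v ∈ occupied A ↔ ∃ q, A q = v := by
  simp [occupied]

theorem consistent.occupied_mem {E : V → V → Prop} {C : Finset V → Prop} {A : P → V}
    {f : List (V × V)} (h : consistent E C A f) : C (occupied A) := by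
  cases f with
  | nil => exact h
  | cons e f => exact h.1

/-- A property of configurations preserved by every single legal move whose result obeys the
constraints holds at the end of every consistent plan. -/
theorem consistent.invariant {E : V → V → Prop} {C : Finset V → Prop} {I : (P → V) → Prop}
    (hI : ∀ A e, I A → E e.1 e.2 → C (occupied (movePeb A e)) → I (movePeb A e))
    {A : P → V} {f : List (V × V)} (h : consistent E C A f) (hA : I A) :
    I (execPlan A f) := by
  induction f generalizing A with
  | nil => exact hA
  | cons e f ih => exact ih h.2.2 (hI A e hA h.2.1.1 h.2.2.occupied_mem)

theorem consistent.snoc {E : V → V → Prop} {C : Finset V → Prop} {A : P → V}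
    {f : List (V × V)} {e : V × V} (h : consistent E C A f) (he : stepOK E (execPlan A f) e)
    (hC : C (occupied (movePeb (execPlan A f) e))) : consistent E C A (f ++ [e]) := by
  induction f generalizing A with
  | nil => exact ⟨h, he, hC⟩
  | cons e' f ih => exact ⟨h.1, h.2.1, ih h.2.2 he hC⟩

/-- `B` is the final configuration of some plan consistent with `C` starting from `A`. -/
def Reach (E : V → V → Prop) (C : Finset V → Prop) (A B : P → V) : Prop :=
  ∃ f, consistent E C A f ∧ execPlan A f = B

theorem Reach.step {E : V → V → Prop} {C : Finset V → Prop} {A B B' : P → V} (e : V × V)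
    (h : Reach E C A B) (he : stepOK E B e) (hB : movePeb B e = B') (hC : C (occupied B')) :
    Reach E C A B' := by
  obtain ⟨f, hf, rfl⟩ := h
  subst hB
  exact ⟨f ++ [e], hf.snoc he hC, execPlan_snoc _ _ _⟩

theorem card_pair_inter_le_one {a b : V} (hab : a ≠ b) (U : Finset V) :
    (({a, b} : Finset V) ∩ U).card ≤ 1 ↔ ¬ (a ∈ U ∧ b ∈ U) := by
  rw [Finset.card_le_one]
  constructor
  · rintro h ⟨ha, hb⟩
    exact hab (h a (by simp [ha]) b (by simp [hb]))
  · intro h x hx y hy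
    simp only [Finset.mem_inter, Finset.mem_insert, Finset.mem_singleton] at hx hy
    grind

end Plans

/-! ### The constraints and clause satisfaction -/

section Reduction

variable {n k : ℕ} {φ : Fin k → List (Fin n × Bool)}

theorem CQ_SatQ_iff (U : Finset (SatV n k φ)) :
    CQ (SatQ n k φ) U ↔
      (∀ i, ¬ (dV n k φ ⟨1, by omega⟩ ∈ U ∧ oV n k φ i ∈ U)) ∧
      (∀ jm, ¬ (cV n k φ jm ∈ U ∧ litV n k φ (litOf n k φ jm) ∈ U)) := by
  constructor
  · intro h
    exact ⟨fun i => (card_pair_inter_le_one (by simp [dV, oV]) U).1 (h _ (Or.inl ⟨i, rfl⟩)),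
      fun jm => (card_pair_inter_le_one (by simp [cV, litV]) U).1 (h _ (Or.inr ⟨jm, rfl⟩))⟩
  · rintro ⟨h1, h2⟩ p (⟨i, rfl⟩ | ⟨jm, rfl⟩)
    · exact (card_pair_inter_le_one (by simp [dV, oV]) U).2 (h1 i)
    · exact (card_pair_inter_le_one (by simp [cV, litV]) U).2 (h2 jm)

/-- Clause `j` holds under the assignment `τ`. -/
def ClauseSat (φ : Fin k → List (Fin n × Bool)) (τ : Fin n → Bool) (j : Fin k) : Prop :=
  ∃ l ∈ φ j, τ l.1 = l.2

theorem litOf_mem (jm : ClauseIdx n k φ) : litOf n k φ jm ∈ φ jm.1.1 :=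
  List.get_mem _ _

/-- The bound of three literals per clause is what makes every literal of a clause an
occurrence with a vertex of its own. -/
theorem ClauseSat.exists_idx (hlen : ∀ j : Fin k, (φ j).length ≤ 3) {τ : Fin n → Bool}
    {j : Fin k} (h : ClauseSat φ τ j) :
    ∃ jm : ClauseIdx n k φ, jm.1.1 = j ∧
      τ (litOf n k φ jm).1 = (litOf n k φ jm).2 := by
  obtain ⟨l, hl, hτ⟩ := h
  obtain ⟨m, hm, rfl⟩ := List.mem_iff_getElem.1 hl
  exact ⟨⟨(j, ⟨m, lt_of_lt_of_le hm (hlen j)⟩), hm⟩, rfl, hτ⟩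

/-! ### Feasibility implies satisfiability -/

/-- The invariant for necessity. Either the marked pebble is still at `s` and each obstacle is
at its start or at a literal of its variable, or the obstacles sit on the false literals of an
assignment `τ` which satisfies every clause already traversed by the marked pebble, including
the clause it is in when it stands on a clause vertex. -/
def SatInv (A : Fin (n + 1) → SatV n k φ) : Prop :=
  (A 0 = dV n k φ ⟨0, by omega⟩ ∧
    ∀ i : Fin n, A i.succ = oV n k φ i ∨ ∃ b, A i.succ = litV n k φ (i, b)) ∨
  ∃ τ : Fin n → Bool, (∀ i : Fin n, A i.succ = litV n k φ (i, !τ i)) ∧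
    ((∃ (j : ℕ) (hj : j + 1 < k + 2), A 0 = dV n k φ ⟨j + 1, hj⟩ ∧
        ∀ j' : Fin k, (j' : ℕ) < j → ClauseSat φ τ j') ∨
     (∃ jm : ClauseIdx n k φ, A 0 = cV n k φ jm ∧
        ∀ j' : Fin k, j' ≤ jm.1.1 → ClauseSat φ τ j'))

theorem SatInv.move (A : Fin (n + 1) → SatV n k φ) (e : SatV n k φ × SatV n k φ) (hA : SatInv A)
    (he : SatE n k φ e.1 e.2) (hC : CQ (SatQ n k φ) (occupied (movePeb A e))) :
    SatInv (movePeb A e) := by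
  obtain ⟨u, v⟩ := e
  rw [CQ_SatQ_iff] at hC
  simp only [mem_occupied] at hC
  obtain ⟨hC1, hC2⟩ := hC
  rcases hA with ⟨h0, hob⟩ | ⟨τ, hob, hpos⟩
  · rcases he with ⟨i, b, hu, hv⟩ | ⟨hu, hv⟩ | ⟨jm, hu, hv⟩ | ⟨jm, hu, hv⟩ <;>
      simp only at hu hv <;> subst hu hv
    · refine Or.inl ⟨by simp [movePeb, h0, dV, oV], fun i' => ?_⟩
      rcases hob i' with h | ⟨b', h⟩
      · by_cases hi : i' = i
        · subst hi
          exact Or.inr ⟨b, by simp [movePeb, h]⟩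
        · exact Or.inl (by simp [movePeb, h, oV, hi])
      · exact Or.inr ⟨b', by simp [movePeb, h, oV, litV]⟩
    · have h0' : movePeb A (dV n k φ ⟨0, by omega⟩, dV n k φ ⟨1, by omega⟩) 0
          = dV n k φ ⟨1, by omega⟩ := by simp [movePeb, h0]
      have hob' : ∀ i : Fin n, ∃ b, A i.succ = litV n k φ (i, b) := by
        intro i
        rcases hob i with h | h
        · exact absurd ⟨⟨0, h0'⟩, ⟨i.succ, by simp [movePeb, h, oV, dV]⟩⟩ (hC1 i)
        · exact h
      choose σ hσ using hob'
      exact Or.inr ⟨fun i => !σ i, fun i => by simp [movePeb, hσ, litV, dV],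
        Or.inl ⟨0, by omega, h0', by simp⟩⟩
    · refine Or.inl ⟨by simp [movePeb, h0, dV], fun i => ?_⟩
      rcases hob i with h | ⟨b, h⟩
      · exact Or.inl (by simp [movePeb, h, dV, oV])
      · exact Or.inr ⟨b, by simp [movePeb, h, dV, litV]⟩
    · refine Or.inl ⟨by simp [movePeb, h0, dV, cV], fun i => ?_⟩
      rcases hob i with h | ⟨b, h⟩
      · exact Or.inl (by simp [movePeb, h, cV, oV])
      · exact Or.inr ⟨b, by simp [movePeb, h, cV, litV]⟩
  · have hob' : ∀ i : Fin n, movePeb A (u, v) i.succ = litV n k φ (i, !τ i) := by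
      intro i
      rcases he with ⟨i, b, hu, hv⟩ | ⟨hu, hv⟩ | ⟨jm, hu, hv⟩ | ⟨jm, hu, hv⟩ <;>
        simp only at hu hv <;> subst hu hv <;> simp [movePeb, hob, litV, dV, cV, oV]
    refine Or.inr ⟨τ, hob', ?_⟩
    by_cases h0 : A 0 = u
    · have h0' : movePeb A (u, v) 0 = v := by simp [movePeb, h0]
      rw [h0']
      rw [h0] at hpos
      rcases he with ⟨i, b, hu, hv⟩ | ⟨hu, hv⟩ | ⟨jm, hu, hv⟩ | ⟨jm, hu, hv⟩ <;>
        simp only at hu hv <;> subst hu hv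
      · simp [oV, dV, cV] at hpos
      · simp [dV, cV] at hpos
      · right
        refine ⟨jm, rfl, fun j' hj' => ?_⟩
        have hprev : ∀ j' : Fin k, (j' : ℕ) < jm.1.1 → ClauseSat φ τ j' := by
          rcases hpos with ⟨j, hj, h, hs⟩ | ⟨jm', h, -⟩
          · simp only [dV, Sum.inr.injEq, Sum.inl.injEq, Fin.mk.injEq] at h
            intro j' hj'
            exact hs j' (by omega)
          · simp [dV, cV] at h
        rcases hj'.lt_or_eq with hlt | rfl
        · exact hprev j' hlt
        · -- The obstacle of the literal's variable is not on the literal itself.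
          refine ⟨litOf n k φ jm, litOf_mem jm, ?_⟩
          by_contra hne
          refine hC2 jm ⟨⟨0, h0'⟩, ⟨(litOf n k φ jm).1.succ, ?_⟩⟩
          rw [hob']
          congr 1
          ext
          · rfl
          · simp [Bool.eq_not_of_ne hne]
      · left
        refine ⟨jm.1.1 + 1, by omega, rfl, fun j' hj' => ?_⟩
        rcases hpos with ⟨j, hj, h, hs⟩ | ⟨jm', h, hs⟩
        · simp [dV, cV] at h
        · simp only [cV, Sum.inr.injEq] at h
          subst h
          exact hs j' (by rw [Fin.le_def]; omega)
    · have h0' : movePeb A (u, v) 0 = A 0 := by simp [movePeb, h0]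
      rwa [h0']

/-! ### Satisfiability implies feasibility -/

/-- The configuration with the marked pebble at `x` in which exactly the obstacles of the
variables in `S` have left their start, for the literal that is false under `τ`. -/
def conf (τ : Fin n → Bool) (x : SatV n k φ) (S : Finset (Fin n)) : Fin (n + 1) → SatV n k φ :=
  Fin.cases x (fun i => if i ∈ S then litV n k φ (i, !τ i) else oV n k φ i)

theorem mem_occupied_conf {τ : Fin n → Bool} {x v : SatV n k φ} {S : Finset (Fin n)} :
    v ∈ occupied (conf τ x S) ↔
      x = v ∨ ∃ i, (if i ∈ S then litV n k φ (i, !τ i) else oV n k φ i) = v := by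
  simp [mem_occupied, Fin.exists_fin_succ, conf]

theorem CQ_conf_backbone (τ : Fin n → Bool) (j : Fin (k + 2)) (S : Finset (Fin n))
    (h : (j : ℕ) = 1 → S = Finset.univ) :
    CQ (SatQ n k φ) (occupied (conf τ (dV n k φ j) S)) := by
  rw [CQ_SatQ_iff]
  simp only [mem_occupied_conf]
  constructor
  · rintro i ⟨h1 | ⟨i', h1⟩, h2 | ⟨i', h2⟩⟩
    · simp [dV, oV] at h2
    · simp only [dV, Sum.inr.injEq, Sum.inl.injEq] at h1
      rw [h (by rw [h1])] at h2
      simp [litV, oV] at h2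
    · simp [dV, oV] at h2
    · split_ifs at h1 <;> simp [litV, oV, dV] at h1
  · rintro jm ⟨h1 | ⟨i', h1⟩, -⟩
    · simp [dV, cV] at h1
    · split_ifs at h1 <;> simp [litV, oV, cV] at h1

theorem CQ_conf_clause (τ : Fin n → Bool) (jm : ClauseIdx n k φ)
    (h : τ (litOf n k φ jm).1 = (litOf n k φ jm).2) :
    CQ (SatQ n k φ) (occupied (conf τ (cV n k φ jm) Finset.univ)) := by
  rw [CQ_SatQ_iff]
  simp only [mem_occupied_conf]
  constructor
  · rintro i ⟨h1 | ⟨i', h1⟩, -⟩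
    · simp [dV, cV] at h1
    · simp [litV, dV] at h1
  · rintro jm' ⟨h1 | ⟨i', h1⟩, h2 | ⟨i'', h2⟩⟩
    · simp [litV, cV] at h2
    · simp only [cV, Sum.inr.injEq] at h1
      subst h1
      simp only [Finset.mem_univ, if_true, litV, Sum.inr.injEq, Sum.inl.injEq] at h2
      rw [← h2] at h
      simp at h
    · simp [litV, cV] at h1
    · simp [litV, cV] at h1

theorem reach_obstacles (τ : Fin n → Bool) (S : Finset (Fin n)) :
    Reach (SatE n k φ) (CQ (SatQ n k φ)) (satInit n k φ)
      (conf τ (dV n k φ ⟨0, by omega⟩) S) := by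
  induction S using Finset.induction_on with
  | empty =>
    have h : satInit n k φ = conf τ (dV n k φ ⟨0, by omega⟩) ∅ := by
      funext q
      cases q using Fin.cases <;> simp [satInit, conf]
    refine ⟨[], ?_, h⟩
    change CQ _ (occupied _)
    rw [h]
    exact CQ_conf_backbone τ _ _ (by simp)
  | insert i S hi ih =>
    refine ih.step (oV n k φ i, litV n k φ (i, !τ i)) ⟨Or.inl ⟨i, _, rfl, rfl⟩, ?_, ?_⟩ ?_
      (CQ_conf_backbone τ _ _ (by simp))
    · exact mem_occupied_conf.2 (Or.inr ⟨i, by simp [hi]⟩)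
    · rw [mem_occupied_conf]
      rintro (h | ⟨i', h⟩)
      · simp [dV, litV] at h
      · split_ifs at h with h'
        · simp only [litV, Sum.inr.injEq, Sum.inl.injEq, Prod.mk.injEq] at h
          exact hi (h.1 ▸ h')
        · simp [oV, litV] at h
    · funext q
      cases q using Fin.cases with
      | zero => simp [movePeb, conf, dV, oV]
      | succ i' =>
        by_cases h : i' = i
        · subst h; simp [movePeb, conf, hi]
        · by_cases h' : i' ∈ S <;> simp [movePeb, conf, h, h', oV, litV]

/-- Once all obstacles have moved, the marked pebble can follow any edge between vertices
that are not obstacle or literal vertices, provided the result obeys the constraints. -/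
theorem Reach.marked {A : Fin (n + 1) → SatV n k φ} {τ : Fin n → Bool}
    {x y : Fin (k + 2) ⊕ ClauseIdx n k φ}
    (h : Reach (SatE n k φ) (CQ (SatQ n k φ)) A
      (conf τ (Sum.inr (Sum.inr x) : SatV n k φ) Finset.univ))
    (hE : SatE n k φ (Sum.inr (Sum.inr x)) (Sum.inr (Sum.inr y))) (hxy : x ≠ y)
    (hC : CQ (SatQ n k φ)
      (occupied (conf τ (Sum.inr (Sum.inr y) : SatV n k φ) Finset.univ))) :
    Reach (SatE n k φ) (CQ (SatQ n k φ)) A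
      (conf τ (Sum.inr (Sum.inr y) : SatV n k φ) Finset.univ) := by
  refine h.step (Sum.inr (Sum.inr x), Sum.inr (Sum.inr y)) ⟨hE, ?_, ?_⟩ ?_ hC
  · exact mem_occupied_conf.2 (Or.inl rfl)
  · rw [mem_occupied_conf]
    simp [litV, hxy]
  · funext q
    cases q using Fin.cases <;> simp [movePeb, conf, litV]

theorem reach_backbone (hlen : ∀ j : Fin k, (φ j).length ≤ 3) {τ : Fin n → Bool}
    (hτ : ∀ j, ClauseSat φ τ j) (j : ℕ) (hj : j + 1 < k + 2) :
    Reach (SatE n k φ) (CQ (SatQ n k φ)) (satInit n k φ)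
      (conf τ (dV n k φ ⟨j + 1, hj⟩) Finset.univ) := by
  induction j with
  | zero =>
    exact (reach_obstacles τ Finset.univ).marked (Or.inr (Or.inl ⟨rfl, rfl⟩)) (by simp)
      (CQ_conf_backbone τ _ _ (by simp))
  | succ j ih =>
    obtain ⟨jm, hjm, hl⟩ := (hτ ⟨j, by omega⟩).exists_idx hlen
    have hval : (jm.1.1 : ℕ) = j := by rw [hjm]
    have hc : Reach (SatE n k φ) (CQ (SatQ n k φ)) (satInit n k φ)
        (conf τ (cV n k φ jm) Finset.univ) :=
      (ih (by omega)).marked (Or.inr (Or.inr (Or.inl ⟨jm, by simp [dV, hval], rfl⟩))) (by simp)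
        (CQ_conf_clause τ jm hl)
    exact hc.marked (Or.inr (Or.inr (Or.inr ⟨jm, rfl, by simp [dV, hval]⟩))) (by simp)
      (CQ_conf_backbone τ _ _ (by simp))

end Reduction

/-- Correctness of the 3-SAT reduction: the `C`-MP instance built from a 3-SAT formula
`φ` with `n` variables and `k` clauses (each with at most 3 literals) — marked pebble
from `s` with target `t`, obstacle pebbles at `o_1, …, o_n`, constraint set `C_Q` for
the family `Q` above — is feasible iff `φ` is satisfiable. -/
theorem stmt14 (n k : ℕ) (hk : 0 < k) (φ : Fin k → List (Fin n × Bool))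
    (hlen : ∀ j : Fin k, (φ j).length ≤ 3) :
    (∃ f : List (SatV n k φ × SatV n k φ),
        consistent (SatE n k φ) (CQ (SatQ n k φ)) (satInit n k φ) f ∧
        execPlan (satInit n k φ) f 0 = dV n k φ ⟨k + 1, by omega⟩) ↔
      (∃ τ : Fin n → Bool, ∀ j : Fin k, ∃ l ∈ φ j, τ l.1 = l.2) := by
  constructor
  · rintro ⟨f, hf, hend⟩
    have hinit : SatInv (satInit n k φ) := Or.inl ⟨rfl, fun i => Or.inl rfl⟩
    rcases hf.invariant SatInv.move hinit with ⟨h, -⟩ | ⟨τ, -, ⟨j, hj, h, hs⟩ | ⟨jm, h, -⟩⟩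
    · rw [hend] at h
      simp [dV] at h
    · rw [hend] at h
      simp only [dV, Sum.inr.injEq, Sum.inl.injEq, Fin.mk.injEq] at h
      exact ⟨τ, fun j' => hs j' (by omega)⟩
    · rw [hend] at h
      simp [dV, cV] at h
  · rintro ⟨τ, hτ⟩
    obtain ⟨f, hf, hend⟩ := reach_backbone hlen hτ k (by omega)
    exact ⟨f, hf, by rw [hend]; rfl⟩
end
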